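/- arXiv:math/0405052 — 2 statements merged into one kernel-verified Lean document; each statement's English description precedes it below -/
import Mathlib

section
/- S[U]^G is Cohen-Macaulay if and only if S[V]^G is Cohen-Macaulay. -/
set_option synthInstance.maxHeartbeats 1000000
set_option maxHeartbeats 1000000

open MvPolynomial

/-- The algebra endomorphism of the polynomial ring induced by a matrix acting (on the
right) on the coefficient row vectors of linear forms. -/
noncomputable def matSub {F : Type*} [CommRing F] {n : ℕ} (M : Matrix (Fin n) (Fin n) F) :
    MvPolynomial (Fin n) F →ₐ[F] MvPolynomial (Fin n) F :=
  aeval (fun i => ∑ j, M i j • X j)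

/-- The invariant ring of a matrix representation. -/
noncomputable def invariants {F : Type*} [CommRing F] {n : ℕ} {G : Type*} [Group G]
    (ρ : G →* GL (Fin n) F) : Subalgebra F (MvPolynomial (Fin n) F) where
  carrier := {p | ∀ σ : G, matSub ((ρ σ : Matrix (Fin n) (Fin n) F)) p = p}
  mul_mem' := fun ha hb σ => by rw [map_mul, ha σ, hb σ]
  add_mem' := fun ha hb σ => by rw [map_add, ha σ, hb σ]
  one_mem' := fun σ => map_one _
  zero_mem' := fun σ => map_zero _
  algebraMap_mem' := fun r σ => AlgHom.commutes _ r

/-- A homogeneous system of parameters of an invariant ring `R ⊆ F[X₁,…,Xₙ]`: a family of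
`n` algebraically independent homogeneous elements of positive degree over whose generated
polynomial subalgebra `R` is a finitely generated module. -/
def IsHSOP {F : Type*} [Field F] {n : ℕ} (R : Subalgebra F (MvPolynomial (Fin n) F))
    (f : Fin n → R) : Prop :=
  AlgebraicIndependent F f ∧
  (∀ i, ∃ d : ℕ, 0 < d ∧ (f i : MvPolynomial (Fin n) F).IsHomogeneous d) ∧
  Module.Finite (Algebra.adjoin F (Set.range f)) R

/-- `R` is Cohen-Macaulay: `R` is a free module over the subalgebra generated by some
homogeneous system of parameters. -/
def IsCM {F : Type*} [Field F] {n : ℕ} (R : Subalgebra F (MvPolynomial (Fin n) F)) : Prop :=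
  ∃ f : Fin n → R, IsHSOP R f ∧ Module.Free (Algebra.adjoin F (Set.range f)) R

/-!
Write `A = S[U]^G`, `R = S[V]^G`, and let `t` be the linear form of `f̂`. A splitting makes
`π : A → R` surjective with kernel `(t)` and identifies `A` with `R[t]`, so adjoining `t` to a
homogeneous system of parameters of `R` over which `R` is free gives one of `A`.

Conversely, let `A` be free over `F[y₀, …, yₘ]`, where the `yᵢ` have a common degree after passing
to powers. The ideal `(t)` contains a nonzero `δ ∈ F[y₀, …, yₘ]`. Take `θᵢ`, for `1 ≤ i ≤ m`, to
be the homogenization of a monic `pᵢ ∈ F[X]` at `(yᵢ, y₀)`. If the `pᵢ` avoid the roots of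
successive resultants, elimination yields a nonzero `l(y₀) ∈ (δ, θ₁, …, θₘ)`. Since `A` is still
free over `F[y₀][θ₁, …, θₘ]`, this makes `t` regular modulo `(θ)` and `R / (πθ)`
finite-dimensional. Homogeneous lifts of a basis of `R / (πθ)` generate `R` over `F[πθ]` by graded
Nakayama, and regularity of `t` shows that their module of relations `K` over `F[πθ]` satisfies
`K = I K`, with `I` the ideal generated by `πθ`, whence `K = 0`.
-/

/-- A ring homomorphism making its target a finite free module over its source. -/
structure IsFiniteFree {R S : Type*} [CommRing R] [CommRing S] (f : R →+* S) : Prop where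
  free : letI := f.toAlgebra; Module.Free R S
  finite : f.Finite

theorem isFiniteFree_algebraMap_iff {R S : Type*} [CommRing R] [CommRing S]
    [inst : Algebra R S] :
    IsFiniteFree (algebraMap R S) ↔ Module.Free R S ∧ Module.Finite R S := by
  have toAlgebra_eq : (algebraMap R S).toAlgebra = inst := Algebra.algebra_ext _ _ fun _ => rfl
  rw [← RingHom.finite_algebraMap]
  refine ⟨fun h => ⟨?_, h.finite⟩, fun h => ⟨?_, h.2⟩⟩
  · exact toAlgebra_eq ▸ h.free
  · exact toAlgebra_eq ▸ h.1

namespace IsFiniteFree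

variable {R S T : Type*} [CommRing R] [CommRing S] [CommRing T]

theorem comp {g : S →+* T} {f : R →+* S} (hg : IsFiniteFree g) (hf : IsFiniteFree f) :
    IsFiniteFree (g.comp f) := by
  algebraize [f, g, g.comp f]
  have := hf.free
  have := hg.free
  exact ⟨Module.Free.trans (R := R) (S := S) (M := T), hg.finite.comp hf.finite⟩

theorem of_bijective {f : R →+* S} (hf : Function.Bijective f) : IsFiniteFree f := by
  algebraize [f]
  let e : R ≃ₗ[R] S := LinearEquiv.ofBijective (Algebra.linearMap R S) hf
  exact ⟨Module.Free.of_equiv e, Module.Finite.equiv e⟩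

theorem of_ringEquiv {R' S' : Type*} [CommRing R'] [CommRing S'] {f : R →+* S} {g : R' →+* S'}
    (eR : R ≃+* R') (eS : S ≃+* S')
    (hcomm : (eS : S →+* S').comp f = g.comp (eR : R →+* R')) (hg : IsFiniteFree g) :
    IsFiniteFree f := by
  have hR : IsFiniteFree (eR : R →+* R') := .of_bijective eR.bijective
  have hS : IsFiniteFree (eS.symm : S' →+* S) := .of_bijective eS.symm.bijective
  have := hS.comp (hg.comp hR)
  rwa [← hcomm, ← RingHom.comp_assoc, RingEquiv.symm_comp, RingHom.id_comp] at this

theorem injective [Nontrivial S] {f : R →+* S} (hf : IsFiniteFree f) :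
    Function.Injective f := by
  algebraize [f]
  have := hf.free
  exact FaithfulSMul.algebraMap_injective R S

theorem mapRingHom {f : R →+* S} (hf : IsFiniteFree f) :
    IsFiniteFree (Polynomial.mapRingHom f) := by
  algebraize [f]
  have := hf.free
  have : Module.Finite R S := hf.finite
  let : Algebra (Polynomial R) (Polynomial S) := (Polynomial.mapRingHom f).toAlgebra
  have isBaseChange : IsBaseChange (Polynomial R)
      (IsScalarTower.toAlgHom R S (Polynomial S)).toLinearMap :=
    (inferInstance : Algebra.IsPushout R (Polynomial R) S (Polynomial S)).out
  exact ⟨isBaseChange.free, Module.Finite.equiv isBaseChange.equiv⟩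

theorem of_monic_of_ker_eval₂RingHom {f : R →+* S} {x : S} {h : Polynomial R} (hh : h.Monic)
    (hsurj : Function.Surjective (Polynomial.eval₂RingHom f x))
    (hker : RingHom.ker (Polynomial.eval₂RingHom f x) = Ideal.span {h}) : IsFiniteFree f := by
  algebraize [f]
  let adjoinRoot : IsAdjoinRootMonic S h :=
    { map := Polynomial.aeval x
      map_surjective := hsurj
      ker_map := hker
      monic := hh }
  exact ⟨.of_basis adjoinRoot.basis, adjoinRoot.finite⟩

end IsFiniteFree

section MonicSubstitution

open scoped Polynomial

variable {L : Type*} [CommRing L]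

theorem finSuccEquiv_aeval_X_zero {m : ℕ} (p : L[X]) :
    finSuccEquiv L m (Polynomial.aeval (X 0) p) = p.map C := by
  rw [← Polynomial.aeval_algHom_apply, finSuccEquiv_X_zero]
  exact Polynomial.aeval_X_left_eq_map p

theorem finSuccEquiv_aeval_X_succ {m : ℕ} (i : Fin m) (p : L[X]) :
    finSuccEquiv L m (Polynomial.aeval (X i.succ) p) =
      Polynomial.C (Polynomial.aeval (X i) p) := by
  rw [← Polynomial.aeval_algHom_apply, finSuccEquiv_X_succ]
  exact Polynomial.aeval_algebraMap_apply (MvPolynomial (Fin m) L)[X] (X i) p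

variable [Nontrivial L]

theorem isFiniteFree_eval₂RingHom_C_of_monic {g : L[X]} (hg : g.Monic) (hdeg : 0 < g.natDegree) :
    IsFiniteFree (Polynomial.eval₂RingHom Polynomial.C g) := by
  -- Over its subring `L[g]`, the ring `L[X]` is generated by the root `X` of `g(Y) - g`.
  have monic : (g.map Polynomial.C - Polynomial.C Polynomial.X : L[X][X]).Monic :=
    (hg.map Polynomial.C).sub_of_left <| by
      rw [hg.degree_map]
      exact Polynomial.degree_C_le.trans_lt (Polynomial.natDegree_pos_iff_degree_pos.1 hdeg)
  have eval_swap : Polynomial.eval₂RingHom (Polynomial.eval₂RingHom Polynomial.C g) Polynomial.X =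
      (Polynomial.evalRingHom g).comp (Polynomial.Bivariate.swap (R := L)).toRingEquiv := by
    ext <;> simp [Polynomial.Bivariate.swap_apply]
  refine .of_monic_of_ker_eval₂RingHom (x := Polynomial.X) monic ?_ ?_
  · rw [eval_swap]
    intro p
    exact ⟨p.map Polynomial.C, by simp [Polynomial.Bivariate.swap_map_C]⟩
  · ext p
    rw [eval_swap, ← RingHom.comap_ker, Polynomial.ker_evalRingHom, Ideal.mem_comap,
      Ideal.mem_span_singleton, Ideal.mem_span_singleton,
      ← map_dvd_iff (Polynomial.Bivariate.swap (R := L)), map_sub,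
      Polynomial.Bivariate.swap_Y, Polynomial.Bivariate.swap_C, ← neg_sub]
    exact neg_dvd.trans (iff_of_eq (congrArg _ (Polynomial.Bivariate.swap_swap_apply p)))

theorem isFiniteFree_aeval_of_monic : ∀ {m : ℕ} {g : Fin m → L[X]},
    (∀ i, (g i).Monic) → (∀ i, 0 < (g i).natDegree) →
    IsFiniteFree (aeval (R := L) fun i =>
      Polynomial.aeval (X i : MvPolynomial (Fin m) L) (g i)).toRingHom
  | 0, g, _, _ => by
    convert IsFiniteFree.of_bijective (f := RingHom.id (MvPolynomial (Fin 0) L))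
      Function.bijective_id
    exact MvPolynomial.ringHom_ext (by simp) fun i => i.elim0
  | m + 1, g, hg, hdeg => by
    have hsucc := isFiniteFree_aeval_of_monic (fun i => hg (Fin.succ i)) fun i => hdeg i.succ
    have hzero := isFiniteFree_eval₂RingHom_C_of_monic ((hg 0).map (C (σ := Fin m)))
      ((hg 0).natDegree_map (C (σ := Fin m)) ▸ hdeg 0)
    refine .of_ringEquiv (finSuccEquiv L m).toRingEquiv (finSuccEquiv L m).toRingEquiv
      (MvPolynomial.ringHom_ext (fun r => ?_) (Fin.cases ?_ fun i => ?_))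
      (hzero.comp hsucc.mapRingHom)
    · simp [finSuccEquiv_apply]
    · simp [finSuccEquiv_aeval_X_zero, finSuccEquiv_X_zero]
    · simp [finSuccEquiv_aeval_X_succ, finSuccEquiv_X_succ]

theorem IsFiniteFree.aeval_aeval {A : Type*} [CommRing A] [Algebra L A] {m : ℕ} {z : Fin m → A}
    (hz : IsFiniteFree (aeval (R := L) z).toRingHom) {g : Fin m → L[X]} (hg : ∀ i, (g i).Monic)
    (hdeg : ∀ i, 0 < (g i).natDegree) :
    IsFiniteFree (aeval (R := L) fun i => Polynomial.aeval (z i) (g i)).toRingHom := by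
  convert hz.comp (isFiniteFree_aeval_of_monic hg hdeg)
  ext <;> simp [← Polynomial.aeval_algHom_apply]

end MonicSubstitution

section CohenMacaulay

variable {F : Type*} [Field F] {n : ℕ}

theorem isFiniteFree_aeval_iff {A : Type*} [CommRing A] [Algebra F A] {ι : Type*} {f : ι → A}
    (hf : AlgebraicIndependent F f) :
    IsFiniteFree (aeval (R := F) f).toRingHom ↔
      Module.Free (Algebra.adjoin F (Set.range f)) A ∧
        Module.Finite (Algebra.adjoin F (Set.range f)) A := by
  rw [← isFiniteFree_algebraMap_iff]
  let e := hf.aevalEquiv.toRingEquiv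
  have comp_eq : (algebraMap (Algebra.adjoin F (Set.range f)) A).comp (e : _ →+* _) =
      (aeval (R := F) f).toRingHom := by
    ext <;> simp [e]
  refine ⟨.of_ringEquiv e.symm (.refl A) ?_, .of_ringEquiv e (.refl A) ?_⟩
  · rw [← comp_eq, RingHom.comp_assoc, RingEquiv.comp_symm]
    rfl
  · exact comp_eq.symm

theorem isCM_iff_exists_isFiniteFree (R : Subalgebra F (MvPolynomial (Fin n) F)) :
    IsCM R ↔ ∃ f : Fin n → R,
      (∀ i, ∃ d : ℕ, 0 < d ∧ (f i : MvPolynomial (Fin n) F).IsHomogeneous d) ∧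
        IsFiniteFree (aeval (R := F) f).toRingHom := by
  constructor
  · rintro ⟨f, ⟨hindep, hhom, hfin⟩, hfree⟩
    exact ⟨f, hhom, (isFiniteFree_aeval_iff hindep).2 ⟨hfree, hfin⟩⟩
  · rintro ⟨f, hhom, hf⟩
    have hindep : AlgebraicIndependent F f := hf.injective
    obtain ⟨hfree, hfin⟩ := (isFiniteFree_aeval_iff hindep).1 hf
    exact ⟨f, ⟨hindep, hhom, hfin⟩, hfree⟩

end CohenMacaulay

section Elimination

open scoped Polynomial

variable {F : Type*} [Field F]

theorem exists_monic_aeval_ne_zero {E : Type*} [Field E] [Algebra F E] (s : Finset E) :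
    ∃ p : F[X], p.Monic ∧ 0 < p.natDegree ∧ ∀ e ∈ s, Polynomial.aeval e p ≠ 0 := by
  classical
  -- `F` may be finite, so no translate `X - c` need avoid `s`; but `X * q + 1` takes the value `1`
  -- at every algebraic element of `s`.
  let q : F[X] := ∏ e ∈ s with IsAlgebraic F e, minpoly F e
  have hq : q.Monic := Polynomial.monic_prod_of_monic _ _ fun e he =>
    minpoly.monic (Finset.mem_filter.1 he).2.isIntegral
  have hXq : (Polynomial.X * q).Monic := Polynomial.monic_X.mul hq
  have hdeg : 0 < (Polynomial.X * q).natDegree := by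
    rw [Polynomial.natDegree_X_mul hq.ne_zero]
    exact Nat.succ_pos _
  have hdeg' : (Polynomial.X * q + 1).natDegree = (Polynomial.X * q).natDegree :=
    Polynomial.natDegree_add_C (a := 1)
  have hmonic : (Polynomial.X * q + 1).Monic :=
    hXq.add_of_left (by simpa using Polynomial.natDegree_pos_iff_degree_pos.1 hdeg)
  refine ⟨Polynomial.X * q + 1, hmonic, hdeg' ▸ hdeg, fun e he => ?_⟩
  by_cases halg : IsAlgebraic F e
  · have hqe : Polynomial.aeval e q = 0 := by
      rw [map_prod]
      exact Finset.prod_eq_zero (Finset.mem_filter.2 ⟨he, halg⟩) (minpoly.aeval F e)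
    simp [hqe]
  · exact fun h => halg ⟨_, hmonic.ne_zero, h⟩

theorem exists_C_mem_span_pair {L : Type*} [CommRing L] (K : Type*) [Field K]
    [Algebra L K] [IsFractionRing L K] {f g : L[X]} (hf : 0 < f.natDegree)
    (hfg : IsCoprime (f.map (algebraMap L K)) (g.map (algebraMap L K))) :
    ∃ l : L, l ≠ 0 ∧ Polynomial.C l ∈ Ideal.span {f, g} := by
  refine ⟨f.resultant g, fun hres => ?_, ?_⟩
  · have hinj := IsFractionRing.injective L K
    have hmap : (f.map (algebraMap L K)).resultant (g.map (algebraMap L K)) = 0 := by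
      rw [Polynomial.natDegree_map_eq_of_injective hinj,
        Polynomial.natDegree_map_eq_of_injective hinj, Polynomial.resultant_map_map, hres, map_zero]
    exact (Polynomial.resultant_eq_zero_iff.1 hmap).2 hfg
  · obtain ⟨a, b, -, -, hab⟩ :=
      Polynomial.exists_mul_add_mul_eq_C_resultant f g le_rfl le_rfl (.inl hf.ne')
    exact Ideal.mem_span_pair.2 ⟨a, b, by rw [← hab]; ring⟩

/-- The homogenization `w ^ n * p (X / w)` of a polynomial `p` of degree `n`, with the
homogenizing variable specialized to `w`. -/
noncomputable def homogenizeAt {L : Type*} [CommRing L] [Algebra F L] (w : L) (p : F[X]) : L[X] :=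
  (p.map (algebraMap F L)).scaleRoots w

section homogenizeAt

variable {L : Type*} [CommRing L] [Algebra F L] (w : L) {p : F[X]}

theorem monic_homogenizeAt (hp : p.Monic) : (homogenizeAt w p).Monic :=
  (Polynomial.monic_scaleRoots_iff w).2 (hp.map _)

theorem natDegree_homogenizeAt [Nontrivial L] : (homogenizeAt w p).natDegree = p.natDegree := by
  rw [homogenizeAt, Polynomial.natDegree_scaleRoots, Polynomial.natDegree_map]

theorem map_homogenizeAt [Nontrivial L] {L' : Type*} [CommRing L'] [Nontrivial L'] [Algebra F L']
    [Algebra L L'] [IsScalarTower F L L'] :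
    (homogenizeAt w p).map (algebraMap L L') = homogenizeAt (algebraMap L L' w) p := by
  ext k
  simp [homogenizeAt, ← IsScalarTower.algebraMap_apply F L L']

theorem aeval_mul_homogenizeAt [Nontrivial L] {A : Type*} [CommRing A] [Algebra F A] [Algebra L A]
    [IsScalarTower F L A] (x : A) :
    Polynomial.aeval (algebraMap L A w * x) (homogenizeAt w p) =
      algebraMap L A w ^ p.natDegree * Polynomial.aeval x p := by
  rw [homogenizeAt, Polynomial.aeval_def, Polynomial.scaleRoots_eval₂_mul, Polynomial.natDegree_map,
    ← Polynomial.aeval_def, Polynomial.aeval_map_algebraMap]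

theorem aeval_homogenizeAt [Nontrivial L] {A : Type*} [CommRing A] [Algebra F A] [Algebra L A]
    [IsScalarTower F L A] (x : A) :
    Polynomial.aeval x (homogenizeAt w p) =
      ∑ k ∈ Finset.range (p.natDegree + 1),
        p.coeff k • (algebraMap L A w ^ (p.natDegree - k) * x ^ k) := by
  rw [Polynomial.aeval_eq_sum_range, natDegree_homogenizeAt]
  refine Finset.sum_congr rfl fun k _ => ?_
  simp [homogenizeAt, Algebra.smul_def, ← IsScalarTower.algebraMap_apply F L A, mul_assoc]

end homogenizeAt

variable {L : Type*} [CommRing L] [IsDomain L] [Algebra F L]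

theorem exists_C_mem_span_pair_homogenizeAt {w : L} (hw : w ≠ 0) {δ : L[X]} (hδ : δ ≠ 0) :
    ∃ p : F[X], p.Monic ∧ 0 < p.natDegree ∧
      ∃ l : L, l ≠ 0 ∧ Polynomial.C l ∈ Ideal.span {homogenizeAt w p, δ} := by
  classical
  let K := FractionRing L
  let E := AlgebraicClosure K
  have hinj : Function.Injective (algebraMap L E) := by
    rw [IsScalarTower.algebraMap_eq L K E]
    exact (algebraMap K E).injective.comp (IsFractionRing.injective L K)
  have hwE : algebraMap L E w ≠ 0 := (map_ne_zero_iff _ hinj).2 hw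
  obtain ⟨p, hp, hdeg, hroots⟩ := exists_monic_aeval_ne_zero (F := F)
    ((δ.aroots E).toFinset.image (· / algebraMap L E w))
  refine ⟨p, hp, hdeg, exists_C_mem_span_pair K (by rwa [natDegree_homogenizeAt]) ?_⟩
  rw [Polynomial.isCoprime_iff_aeval_ne_zero_of_isAlgClosed K E]
  intro a
  rw [or_iff_not_imp_right, not_not, Polynomial.aeval_map_algebraMap,
    Polynomial.aeval_map_algebraMap]
  intro hδa
  have hpa : Polynomial.aeval (a / algebraMap L E w) p ≠ 0 := hroots _ <|
    Finset.mem_image_of_mem _ <| Multiset.mem_toFinset.2 <|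
      (Polynomial.mem_aroots'.2 ⟨(Polynomial.map_ne_zero_iff hinj).2 hδ, hδa⟩)
  rw [← mul_div_cancel₀ a hwE, aeval_mul_homogenizeAt]
  exact mul_ne_zero (pow_ne_zero _ hwE) hpa

theorem exists_C_mem_span_sup_span_homogenizeAt {w : L} (hw : w ≠ 0) : ∀ {m : ℕ}
    {δ : MvPolynomial (Fin m) L}, δ ≠ 0 → ∃ p : Fin m → F[X], (∀ i, (p i).Monic) ∧
      (∀ i, 0 < (p i).natDegree) ∧ ∃ l : L, l ≠ 0 ∧ C l ∈ Ideal.span {δ} ⊔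
        Ideal.span (Set.range fun i => Polynomial.aeval (X i) (homogenizeAt w (p i)))
  | 0, δ, hδ => by
    obtain ⟨l, rfl⟩ := C_surjective (Fin 0) δ
    exact ⟨Fin.elim0, fun i => i.elim0, fun i => i.elim0, l, by simpa using hδ,
      Ideal.mem_sup_left (Ideal.mem_span_singleton_self _)⟩
  | m + 1, δ, hδ => by
    let e := finSuccEquiv L m
    obtain ⟨q, hq, hqdeg, δ', hδ', hmem⟩ := exists_C_mem_span_pair_homogenizeAt (F := F)
      (w := (C w : MvPolynomial (Fin m) L)) (by simpa using hw) (δ := e δ) (by simpa using hδ)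
    obtain ⟨p, hp, hpdeg, l, hl, hlmem⟩ := exists_C_mem_span_sup_span_homogenizeAt hw hδ'
    refine ⟨Fin.cons q p, Fin.cases hq hp, Fin.cases hqdeg hpdeg, l, hl, ?_⟩
    set I := Ideal.span {δ} ⊔ Ideal.span (Set.range fun i =>
      Polynomial.aeval (X i) (homogenizeAt w ((Fin.cons q p : Fin (m + 1) → F[X]) i)))
    have hθ (i) : Polynomial.aeval (X i)
        (homogenizeAt w ((Fin.cons q p : Fin (m + 1) → F[X]) i)) ∈ I :=
      Ideal.mem_sup_right (Ideal.subset_span ⟨i, rfl⟩)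
    have hzero : e (Polynomial.aeval (X 0) (homogenizeAt w q)) = homogenizeAt (C w) q :=
      (finSuccEquiv_aeval_X_zero _).trans (map_homogenizeAt w)
    have hδ'I : e.symm (Polynomial.C δ') ∈ I := by
      refine (Ideal.span_le (I := I.comap e.symm)).2 ?_ hmem
      rintro _ (rfl | rfl)
      · simpa [← hzero] using hθ 0
      · simpa using Ideal.mem_sup_left (Ideal.mem_span_singleton_self δ)
    have hle : Ideal.span {δ'} ⊔ Ideal.span (Set.range fun i =>
        Polynomial.aeval (X i) (homogenizeAt w (p i))) ≤ (I.comap e.symm).comap Polynomial.C := by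
      refine sup_le ((Ideal.span_singleton_le_iff_mem _).2 hδ'I) (Ideal.span_le.2 ?_)
      rintro _ ⟨i, rfl⟩
      simpa [← finSuccEquiv_aeval_X_succ, e] using hθ i.succ
    have hlI : e.symm (Polynomial.C (C l)) ∈ I := hle hlmem
    rwa [show Polynomial.C (C l) = e (C l) by simp [e, finSuccEquiv_apply],
      e.symm_apply_apply] at hlI

end Elimination

section Parameters

open scoped Polynomial

theorem exists_ne_zero_dvd_map_of_isIntegral {R S : Type*} [CommRing R] [CommRing S]
    [IsDomain S] {f : R →+* S} (hf : f.IsIntegral) {t : S} (ht : t ≠ 0) :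
    ∃ r : R, r ≠ 0 ∧ t ∣ f r := by
  have := f.domain_nontrivial
  algebraize [f]
  obtain ⟨r, hr, hr0⟩ := Submodule.exists_mem_ne_zero_of_ne_bot
    (Ideal.comap_ne_bot_of_integral_mem (R := R) ht (Ideal.mem_span_singleton_self t) (hf t))
  exact ⟨r, hr0, Ideal.mem_span_singleton.1 hr⟩

theorem exists_isFiniteFree_homogenizeAt {F L A : Type*} [Field F] [CommRing L] [IsDomain L]
    [Algebra F L] [CommRing A] [IsDomain A] [Algebra L A] {m : ℕ} {z : Fin m → A}
    (hz : IsFiniteFree (aeval (R := L) z).toRingHom) {w : L} (hw : w ≠ 0) {t : A} (ht : t ≠ 0) :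
    ∃ p : Fin m → F[X], (∀ i, 0 < (p i).natDegree) ∧
      IsFiniteFree (aeval (R := L) fun i =>
        Polynomial.aeval (z i) (homogenizeAt w (p i))).toRingHom ∧
      ∃ l : L, l ≠ 0 ∧ algebraMap L A l ∈ Ideal.span {t} ⊔
        Ideal.span (Set.range fun i => Polynomial.aeval (z i) (homogenizeAt w (p i))) := by
  obtain ⟨δ, hδ, htδ⟩ := exists_ne_zero_dvd_map_of_isIntegral hz.finite.to_isIntegral ht
  obtain ⟨p, hp, hdeg, l, hl, hmem⟩ := exists_C_mem_span_sup_span_homogenizeAt (F := F) hw hδ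
  refine ⟨p, hdeg, hz.aeval_aeval (fun i => monic_homogenizeAt w (hp i))
    (fun i => by rw [natDegree_homogenizeAt]; exact hdeg i), l, hl, ?_⟩
  set J := Ideal.span {t} ⊔
    Ideal.span (Set.range fun i => Polynomial.aeval (z i) (homogenizeAt w (p i)))
  have hle : Ideal.span {δ} ⊔ Ideal.span (Set.range fun i =>
      Polynomial.aeval (X i) (homogenizeAt w (p i))) ≤ J.comap (aeval (R := L) z) := by
    refine sup_le ?_ (Ideal.span_le.2 ?_)
    · rw [Ideal.span_singleton_le_iff_mem]
      exact Ideal.mem_sup_left (Ideal.mem_span_singleton.2 htδ)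
    · rintro _ ⟨i, rfl⟩
      refine Ideal.mem_sup_right (Ideal.subset_span ⟨i, ?_⟩)
      simp [← Polynomial.aeval_algHom_apply]
  simpa using hle hmem

end Parameters

section RegularModulo

variable {Q : Type*} [CommRing Q]

theorem mem_idealOfVars_iff {σ L : Type*} [CommRing L] {q : MvPolynomial σ L} :
    q ∈ idealOfVars σ L ↔ constantCoeff q = 0 := by
  rw [← pow_one (idealOfVars σ L), mem_pow_idealOfVars_iff', constantCoeff_eq]
  simp only [Nat.lt_one_iff, Finsupp.degree_eq_zero_iff, forall_eq]

theorem isPrime_idealOfVars (σ L : Type*) [CommRing L] [IsDomain L] :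
    (idealOfVars σ L).IsPrime := by
  have : idealOfVars σ L = RingHom.ker constantCoeff := by
    ext q
    rw [mem_idealOfVars_iff, RingHom.mem_ker]
  rw [this]
  exact RingHom.ker_isPrime _

theorem mem_smul_top_of_smul_mem_of_isPrime {M : Type*} [AddCommGroup M] [Module Q M]
    [Module.Free Q M] {P : Ideal Q} (hP : P.IsPrime) {q : Q} (hq : q ∉ P) {a : M}
    (hqa : q • a ∈ P • (⊤ : Submodule Q M)) : a ∈ P • (⊤ : Submodule Q M) := by
  let b := Module.Free.chooseBasis Q M
  have coord_mem (i) {x : M} (hx : x ∈ P • (⊤ : Submodule Q M)) : b.coord i x ∈ P := by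
    have := Submodule.mem_map_of_mem (f := b.coord i) hx
    rw [Submodule.map_smul''] at this
    simpa using Submodule.smul_mono le_rfl le_top this
  rw [← b.linearCombination_repr a, Finsupp.linearCombination_apply]
  refine Submodule.sum_mem _ fun i _ => Submodule.smul_mem_smul ?_ trivial
  exact (hP.mem_or_mem (by simpa using coord_mem i hqa)).resolve_left hq

theorem mem_map_of_mul_mem_of_mem_sup {A : Type*} [CommRing A] [Algebra Q A] [Module.Free Q A]
    {P : Ideal Q} (hP : P.IsPrime) {q : Q} (hq : q ∉ P) {t : A}
    (hqt : algebraMap Q A q ∈ Ideal.span {t} ⊔ P.map (algebraMap Q A)) {a : A}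
    (hta : t * a ∈ P.map (algebraMap Q A)) : a ∈ P.map (algebraMap Q A) := by
  have hqa : algebraMap Q A q * a ∈ P.map (algebraMap Q A) := by
    obtain ⟨_, hst, v, hv, hq⟩ := Submodule.mem_sup.1 hqt
    obtain ⟨s, rfl⟩ := Ideal.mem_span_singleton'.1 hst
    rw [← hq, add_mul, mul_assoc]
    exact add_mem (Ideal.mul_mem_left _ s hta) (Ideal.mul_mem_right a _ hv)
  have mem_map_iff (x : A) : x ∈ P.map (algebraMap Q A) ↔ x ∈ P • (⊤ : Submodule Q A) := by
    rw [Ideal.smul_top_eq_map]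
    rfl
  rw [mem_map_iff] at hqa ⊢
  exact mem_smul_top_of_smul_mem_of_isPrime hP hq (by rwa [Algebra.smul_def q a])

end RegularModulo

section FreeQuotient

variable {Q M N A R : Type*} [CommRing Q] [AddCommGroup M] [Module Q M] [AddCommGroup N]
  [Module Q N] [AddCommGroup A] [Module Q A] [AddCommGroup R] [Module Q R] (I : Ideal Q)

theorem ker_inf_smul_top_le_smul_ker_of_projective [Module.Projective Q N] {Ψ : M →ₗ[Q] N}
    (hΨ : Function.Surjective Ψ) :
    LinearMap.ker Ψ ⊓ I • (⊤ : Submodule Q M) ≤ I • LinearMap.ker Ψ := by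
  obtain ⟨s, hs⟩ := Module.projective_lifting_property Ψ LinearMap.id hΨ
  let proj : M →ₗ[Q] M := LinearMap.id - s ∘ₗ Ψ
  have range_proj_le : LinearMap.range proj ≤ LinearMap.ker Ψ := by
    rintro _ ⟨x, rfl⟩
    simpa [proj, sub_eq_zero] using (LinearMap.congr_fun hs (Ψ x)).symm
  rintro x ⟨hx, hxI⟩
  have proj_x : proj x = x := by simp [proj, LinearMap.mem_ker.1 hx]
  have := Submodule.mem_map_of_mem (f := proj) hxI
  rw [proj_x, Submodule.map_smul'', Submodule.map_top] at this
  exact Submodule.smul_mono le_rfl range_proj_le this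

theorem ker_inf_smul_top_le_smul_ker_of_regular [Module.Projective Q M] [Module.Projective Q A]
    {φ : M →ₗ[Q] R} (hφ : Function.Surjective φ) {π : A →ₗ[Q] R} (hπ : Function.Surjective π)
    {τ : A →ₗ[Q] A} (hker : LinearMap.ker π = LinearMap.range τ)
    (hreg : ∀ a, τ a ∈ I • (⊤ : Submodule Q A) → a ∈ I • (⊤ : Submodule Q A)) :
    LinearMap.ker φ ⊓ I • (⊤ : Submodule Q M) ≤ I • LinearMap.ker φ := by
  -- An element `c` of `ker φ` extends to an element `(c, a)` of the kernel of a surjection `Ψ` onto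
  -- the projective module `A`, and regularity of `τ` modulo `I` puts `a` into `I • ⊤` when `c` is
  -- in `I • ⊤`.
  obtain ⟨φ', hφ'⟩ := Module.projective_lifting_property π φ hπ
  have π_φ' (c) : π (φ' c) = φ c := LinearMap.congr_fun hφ' c
  have π_τ (a) : π (τ a) = 0 := by
    rw [← LinearMap.mem_ker, hker]
    exact LinearMap.mem_range_self τ a
  have exists_τ {x} (hx : π x = 0) : ∃ a, τ a = x := by
    rwa [← LinearMap.mem_range, ← hker]
  let Ψ : M × A →ₗ[Q] A := φ'.coprod τ
  have surjective_Ψ : Function.Surjective Ψ := fun x => by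
    obtain ⟨c, hc⟩ := hφ (π x)
    obtain ⟨a, ha⟩ := exists_τ (x := x - φ' c) (by simp [π_φ', hc])
    exact ⟨(c, a), by simp [Ψ, ha]⟩
  have map_fst_ker : (LinearMap.ker Ψ).map (LinearMap.fst Q M A) ≤ LinearMap.ker φ := by
    rintro _ ⟨⟨c, a⟩, hca, rfl⟩
    have : φ' c + τ a = 0 := hca
    simpa [π_φ', π_τ] using congrArg π this
  have mem_prod {c : M} {a : A} (hc : c ∈ I • (⊤ : Submodule Q M))
      (ha : a ∈ I • (⊤ : Submodule Q A)) : (c, a) ∈ I • (⊤ : Submodule Q (M × A)) := by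
    have hc' := Submodule.smul_top_le_comap_smul_top I (LinearMap.inl Q M A) hc
    have ha' := Submodule.smul_top_le_comap_smul_top I (LinearMap.inr Q M A) ha
    simpa using add_mem (Submodule.mem_comap.1 hc') (Submodule.mem_comap.1 ha')
  rintro c ⟨hc, hcI⟩
  obtain ⟨a, ha⟩ := exists_τ (x := -φ' c) (by simpa [π_φ'] using hc)
  have haI : a ∈ I • (⊤ : Submodule Q A) := hreg a <| by
    rw [ha]
    exact neg_mem (Submodule.smul_top_le_comap_smul_top I φ' hcI)
  have hca : (c, a) ∈ I • LinearMap.ker Ψ :=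
    ker_inf_smul_top_le_smul_ker_of_projective I surjective_Ψ
      ⟨by simp [Ψ, ha], mem_prod hcI haI⟩
  have := Submodule.mem_map_of_mem (f := LinearMap.fst Q M A) hca
  rw [Submodule.map_smul''] at this
  exact Submodule.smul_mono le_rfl map_fst_ker this

theorem eq_bot_of_le_ideal_smul [IsDomain Q] [Module.IsTorsionFree Q M] {I : Ideal Q} (hI : I ≠ ⊤)
    {K : Submodule Q M} (hfg : K.FG) (hK : K ≤ I • K) : K = ⊥ := by
  obtain ⟨r, hr, hrK⟩ := Submodule.exists_sub_one_mem_and_smul_eq_zero_of_fg_of_le_smul I K hfg hK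
  have r_ne_zero : r ≠ 0 := by
    rintro rfl
    exact hI ((Ideal.eq_top_iff_one I).2 (by simpa using hr))
  exact (Submodule.eq_bot_iff K).2 fun x hx => (smul_eq_zero.1 (hrK x hx)).resolve_left r_ne_zero

theorem linearIndependent_of_relations_mem [IsDomain Q] [IsNoetherianRing Q]
    [Module.Projective Q A] {I : Ideal Q} (hI : I ≠ ⊤)
    {π : A →ₗ[Q] R} (hπ : Function.Surjective π)
    {τ : A →ₗ[Q] A} (hker : LinearMap.ker π = LinearMap.range τ)
    (hreg : ∀ a, τ a ∈ I • (⊤ : Submodule Q A) → a ∈ I • (⊤ : Submodule Q A))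
    {ι : Type*} [Fintype ι] {b : ι → R} (hspan : Submodule.span Q (Set.range b) = ⊤)
    (hrel : ∀ c : ι → Q, ∑ j, c j • b j = 0 → ∀ j, c j ∈ I) : LinearIndependent Q b := by
  classical
  let φ := Fintype.linearCombination Q b
  have surjective_φ : Function.Surjective φ := by
    rw [← LinearMap.range_eq_top, Fintype.range_linearCombination, hspan]
  have ker_le : LinearMap.ker φ ≤ I • (⊤ : Submodule Q (ι → Q)) := fun c hc => by
    rw [pi_eq_sum_univ' c]
    exact Submodule.sum_mem _ fun j _ =>
      Submodule.smul_mem_smul (hrel c (by simpa [φ, Fintype.linearCombination_apply] using hc) j)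
        trivial
  rw [linearIndependent_iff_injective_fintypeLinearCombination, ← LinearMap.ker_eq_bot]
  exact eq_bot_of_le_ideal_smul hI (IsNoetherian.noetherian _) <|
    (le_inf le_rfl ker_le).trans <|
      ker_inf_smul_top_le_smul_ker_of_regular I surjective_φ hπ hker hreg

end FreeQuotient

section FiniteQuotient

open scoped Polynomial

theorem mk_aeval_of_mem {L A ι : Type*} [CommRing L] [CommRing A] [Algebra L A] {θ : ι → A}
    {J : Ideal A} (hθ : ∀ i, θ i ∈ J) (q : MvPolynomial ι L) :
    Ideal.Quotient.mk J (aeval θ q) = algebraMap L (A ⧸ J) (constantCoeff q) := by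
  suffices (Ideal.Quotient.mkₐ L J).comp (aeval θ) =
      (Algebra.ofId L (A ⧸ J)).comp (aeval (R := L) fun _ : ι => 0) by
    simpa [constantCoeff, Algebra.ofId_apply] using DFunLike.congr_fun this q
  ext i
  simpa [Ideal.Quotient.eq_zero_iff_mem] using hθ i

theorem finite_quotient_of_finite_aeval {L A ι : Type*} [CommRing L] [CommRing A] [Algebra L A]
    {θ : ι → A} (hfin : (aeval (R := L) θ).toRingHom.Finite) {J : Ideal A} (hθ : ∀ i, θ i ∈ J) :
    Module.Finite L (A ⧸ J) := by
  have factor : (Ideal.Quotient.mk J).comp (aeval (R := L) θ).toRingHom =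
      (algebraMap L (A ⧸ J)).comp constantCoeff :=
    RingHom.ext (mk_aeval_of_mem hθ)
  have := (RingHom.Finite.of_surjective _ (Ideal.Quotient.mk_surjective (I := J))).comp hfin
  rw [factor] at this
  exact RingHom.finite_algebraMap.1 this.of_comp_finite

theorem finite_of_finite_polynomial_of_algebraMap_eq_zero {F D : Type*} [Field F] [CommRing D]
    [Algebra F D] [Algebra F[X] D] [IsScalarTower F F[X] D] [Module.Finite F[X] D]
    {l : F[X]} (hl : l ≠ 0) (hlD : algebraMap F[X] D l = 0) : Module.Finite F D := by
  let f : AdjoinRoot l →ₐ[F] D := Ideal.Quotient.liftₐ (Ideal.span {l})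
    (IsScalarTower.toAlgHom F F[X] D) fun a ha => by
      obtain ⟨s, rfl⟩ := Ideal.mem_span_singleton'.1 ha
      simp [hlD]
  have finite_f : f.toRingHom.Finite :=
    RingHom.Finite.of_comp_finite (f := AdjoinRoot.mk l) (RingHom.finite_algebraMap.2 ‹_›)
  have finite_adjoinRoot : Module.Finite F (AdjoinRoot l) := (AdjoinRoot.powerBasis hl).finite
  rw [← RingHom.finite_algebraMap, ← f.comp_algebraMap]
  exact finite_f.comp (RingHom.finite_algebraMap.2 finite_adjoinRoot)

end FiniteQuotient

section GradedNakayama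

open DirectSum

variable {F R : Type*} [Field F] [CommRing R] [Algebra F R] (ℛ : ℕ → Submodule F R)
  [GradedAlgebra ℛ]

theorem span_isHomogeneousElem_eq_top :
    Submodule.span F {x | SetLike.IsHomogeneousElem ℛ x} = ⊤ := by
  rw [eq_top_iff, ← (Decomposition.isInternal ℛ).submodule_iSup_eq_top]
  exact iSup_le fun d x hx => Submodule.subset_span ⟨d, hx⟩

theorem exists_isHomogeneousElem_basis_quotient (J : Ideal R) [Module.Finite F (R ⧸ J)] :
    ∃ (k : ℕ) (b : Fin k → R) (B : Module.Basis (Fin k) F (R ⧸ J)),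
      (∀ j, SetLike.IsHomogeneousElem ℛ (b j)) ∧ ∀ j, Ideal.Quotient.mk J (b j) = B j := by
  let H := (Ideal.Quotient.mkₐ F J).toLinearMap '' {x | SetLike.IsHomogeneousElem ℛ x}
  have span_H : ⊤ ≤ Submodule.span F H := by
    rw [← Submodule.map_span, span_isHomogeneousElem_eq_top,
      Submodule.map_top, top_le_iff, LinearMap.range_eq_top]
    exact Ideal.Quotient.mk_surjective
  let B := Module.Basis.ofSpan span_H
  have exists_lift (j) : ∃ x, SetLike.IsHomogeneousElem ℛ x ∧ Ideal.Quotient.mk J x = B j :=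
    Module.Basis.ofSpan_subset span_H ⟨j, rfl⟩
  choose b hb hbB using exists_lift
  let e := B.indexEquiv (Module.finBasis F (R ⧸ J))
  exact ⟨_, b ∘ e.symm, B.reindex e, fun j => hb _, fun j => by simp [hbB]⟩

theorem proj_mem_span_of_isHomogeneousElem {s : Set R}
    (hs : ∀ x ∈ s, SetLike.IsHomogeneousElem ℛ x) (d : ℕ) {x : R} (hx : x ∈ Submodule.span F s) :
    GradedAlgebra.proj ℛ d x ∈ Submodule.span F s := by
  refine (Submodule.span_le (p := (Submodule.span F s).comap (GradedAlgebra.proj ℛ d))).2 ?_ hx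
  intro x hx
  obtain ⟨e, he⟩ := hs x hx
  rw [SetLike.mem_coe, Submodule.mem_comap, GradedAlgebra.proj_apply]
  by_cases hed : e = d
  · rw [← hed, decompose_of_mem_same ℛ he]
    exact Submodule.subset_span hx
  · rw [decompose_of_mem_ne ℛ he hed]
    exact zero_mem _

theorem eq_top_of_span_sup_span_eq_top {ι : Type*} [Finite ι] {g : ι → R} {d : ι → ℕ}
    (hg : ∀ i, g i ∈ ℛ (d i)) (hd : ∀ i, 0 < d i) {s : Set R}
    (hs : ∀ x ∈ s, SetLike.IsHomogeneousElem ℛ x)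
    (hspan : Submodule.span F s ⊔ (Ideal.span (Set.range g)).restrictScalars F = ⊤)
    {W : Submodule F R} (hsW : s ⊆ W) (hgW : ∀ i, ∀ x ∈ W, x * g i ∈ W) : W = ⊤ := by
  cases nonempty_fintype ι
  have proj_mem (e : ℕ) : ∀ x, GradedAlgebra.proj ℛ e x ∈ W := by
    induction e using Nat.strong_induction_on with
    | _ e ih =>
    intro x
    obtain ⟨β, hβ, γ, hγ, rfl⟩ := Submodule.mem_sup.1 (hspan ▸ Submodule.mem_top (x := x))
    obtain ⟨h, rfl⟩ := Ideal.mem_span_range_iff_exists_fun.1 hγ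
    rw [map_add, map_sum]
    refine add_mem (Submodule.span_le.2 hsW (proj_mem_span_of_isHomogeneousElem ℛ hs e hβ))
      (sum_mem fun i _ => ?_)
    rw [GradedAlgebra.proj_apply, coe_decompose_mul_of_right_mem ℛ e (hg i)]
    split_ifs with hi
    · exact hgW i _ (ih _ (Nat.sub_lt_of_pos_le (hd i) hi) (h i))
    · exact zero_mem W
  classical
  refine eq_top_iff.2 fun x _ => ?_
  rw [← sum_support_decompose ℛ x]
  exact sum_mem fun e _ => proj_mem e x

theorem exists_span_eq_top_of_finite_quotient {ι : Type*} [Finite ι] {g : ι → R} {d : ι → ℕ}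
    (hg : ∀ i, g i ∈ ℛ (d i)) (hd : ∀ i, 0 < d i)
    [Module.Finite F (R ⧸ Ideal.span (Set.range g))]
    [Algebra (MvPolynomial ι F) R] (halg : ∀ q : MvPolynomial ι F, algebraMap _ R q = aeval g q) :
    ∃ (k : ℕ) (b : Fin k → R), Submodule.span (MvPolynomial ι F) (Set.range b) = ⊤ ∧
      ∀ c : Fin k → MvPolynomial ι F, ∑ j, c j • b j = 0 → ∀ j, c j ∈ idealOfVars ι F := by
  obtain ⟨k, b, B, hb, hbB⟩ :=
    exists_isHomogeneousElem_basis_quotient ℛ (Ideal.span (Set.range g))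
  have : IsScalarTower F (MvPolynomial ι F) R := .of_algebraMap_eq fun r => by
    rw [halg, MvPolynomial.algebraMap_eq, aeval_C]
  refine ⟨k, b, ?_, fun c hc j => ?_⟩
  · rw [← Submodule.restrictScalars_eq_top_iff F]
    refine eq_top_of_span_sup_span_eq_top ℛ hg hd (s := Set.range b) (Set.forall_mem_range.2 hb)
      ?_ Submodule.subset_span fun i x hx => ?_
    · let mk := (Ideal.Quotient.mkₐ F (Ideal.span (Set.range g))).toLinearMap
      have ker_mk : LinearMap.ker mk = (Ideal.span (Set.range g)).restrictScalars F :=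
        Submodule.ext fun x => Ideal.Quotient.eq_zero_iff_mem
      have mk_comp : mk ∘ b = B := funext hbB
      rw [← ker_mk, ← Submodule.comap_map_eq, Submodule.map_span, ← Set.range_comp, mk_comp,
        B.span_eq, Submodule.comap_top]
    · have := Submodule.smul_mem _ (X i : MvPolynomial ι F) hx
      rwa [Algebra.smul_def, halg, aeval_X, mul_comm] at this
  · rw [mem_idealOfVars_iff]
    refine Fintype.linearIndependent_iff.1 B.linearIndependent (fun j => constantCoeff (c j)) ?_ j
    have := congrArg (Ideal.Quotient.mk (Ideal.span (Set.range g))) hc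
    simpa [Algebra.smul_def (_ : MvPolynomial ι F), halg, hbB, Algebra.smul_def,
      mk_aeval_of_mem fun i => Ideal.subset_span (Set.mem_range_self i)] using this

end GradedNakayama

section QuotientByParameter

open scoped Polynomial

theorem map_idealOfVars_aeval {L A ι : Type*} [CommRing L] [CommRing A] [Algebra L A]
    (θ : ι → A) :
    (idealOfVars ι L).map (aeval (R := L) θ).toRingHom = Ideal.span (Set.range θ) := by
  have aeval_comp_X : (aeval (R := L) θ).toRingHom ∘ X = θ := by
    funext i
    simp
  rw [Ideal.map_span, ← Set.range_comp, aeval_comp_X]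

theorem mem_span_range_of_mul_mem {L A ι : Type*} [CommRing L] [IsDomain L] [CommRing A]
    [Algebra L A] {θ : ι → A} (hθ : IsFiniteFree (aeval (R := L) θ).toRingHom) {t : A} {l : L}
    (hl : l ≠ 0) (hlt : algebraMap L A l ∈ Ideal.span {t} ⊔ Ideal.span (Set.range θ)) {a : A}
    (hta : t * a ∈ Ideal.span (Set.range θ)) : a ∈ Ideal.span (Set.range θ) := by
  let : Algebra (MvPolynomial ι L) A := (aeval (R := L) θ).toRingHom.toAlgebra
  have := hθ.free
  rw [← map_idealOfVars_aeval (L := L)] at hlt hta ⊢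
  refine mem_map_of_mul_mem_of_mem_sup (isPrime_idealOfVars ι L) (q := C l) ?_ ?_ hta
  · simpa [mem_idealOfVars_iff] using hl
  · rwa [← aeval_C (f := θ)] at hlt

theorem free_aeval_of_isFiniteFree {F L A ι : Type*} [CommRing F] [CommRing L] [Algebra F L]
    [Module.Free F L] [CommRing A] [Algebra F A] [Algebra L A] [IsScalarTower F L A] {θ : ι → A}
    (hθ : IsFiniteFree (aeval (R := L) θ).toRingHom) :
    letI := (aeval (R := F) θ).toRingHom.toAlgebra
    Module.Free (MvPolynomial ι F) A := by
  let : Algebra (MvPolynomial ι F) (MvPolynomial ι L) := algebraMvPolynomial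
  let := (aeval (R := F) θ).toRingHom.toAlgebra
  let := (aeval (R := L) θ).toRingHom.toAlgebra
  have := hθ.free
  have : Module.Free (MvPolynomial ι F) (MvPolynomial ι L) :=
    (inferInstance : Algebra.IsPushout F (MvPolynomial ι F) L (MvPolynomial ι L)).out.free
  have : IsScalarTower (MvPolynomial ι F) (MvPolynomial ι L) A :=
    .of_algebraMap_eq fun q => (aeval_map_algebraMap L θ q).symm
  exact Module.Free.trans (S := MvPolynomial ι L)

variable {F A R : Type*} [Field F] [CommRing A] [Algebra F A] [Algebra F[X] A]
  [IsScalarTower F F[X] A] [CommRing R] [Algebra F R] {m : ℕ} {θ : Fin m → A} {t : A} {l : F[X]}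
  {π : A →ₐ[F] R}

theorem finite_quotient_span_range_map (hθ : (aeval (R := F[X]) θ).toRingHom.Finite) (hl : l ≠ 0)
    (hlt : algebraMap F[X] A l ∈ Ideal.span {t} ⊔ Ideal.span (Set.range θ))
    (hπ : Function.Surjective π) (hπt : π t = 0) :
    Module.Finite F (R ⧸ Ideal.span (Set.range fun i => π (θ i))) := by
  set J := Ideal.span {t} ⊔ Ideal.span (Set.range θ)
  have : Module.Finite F[X] (A ⧸ J) := finite_quotient_of_finite_aeval hθ fun i =>
    Ideal.mem_sup_right (Ideal.subset_span ⟨i, rfl⟩)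
  have : Module.Finite F (A ⧸ J) := finite_of_finite_polynomial_of_algebraMap_eq_zero hl
    (Ideal.Quotient.eq_zero_iff_mem.2 hlt)
  have hJ : J ≤ (Ideal.span (Set.range fun i => π (θ i))).comap π := by
    refine sup_le ?_ (Ideal.span_le.2 ?_)
    · simp [hπt]
    · rintro _ ⟨i, rfl⟩
      exact Ideal.subset_span ⟨i, rfl⟩
  exact Module.Finite.of_surjective (Ideal.quotientMapₐ _ π hJ).toLinearMap
    (Ideal.quotientMap_surjective (H := hJ) hπ)

theorem isFiniteFree_aeval_map (ℛ : ℕ → Submodule F R) [GradedAlgebra ℛ]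
    (hθ : IsFiniteFree (aeval (R := F[X]) θ).toRingHom) (hl : l ≠ 0)
    (hlt : algebraMap F[X] A l ∈ Ideal.span {t} ⊔ Ideal.span (Set.range θ))
    (hπ : Function.Surjective π) (hker : RingHom.ker π = Ideal.span {t}) {d : Fin m → ℕ}
    (hd : ∀ i, 0 < d i) (hπθ : ∀ i, π (θ i) ∈ ℛ (d i)) :
    IsFiniteFree (aeval (R := F) fun i => π (θ i)).toRingHom := by
  let Q := MvPolynomial (Fin m) F
  let : Algebra Q A := (aeval (R := F) θ).toRingHom.toAlgebra
  let : Algebra Q R := (aeval (R := F) fun i => π (θ i)).toRingHom.toAlgebra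
  have : Module.Free Q A := free_aeval_of_isFiniteFree hθ
  have := finite_quotient_span_range_map hθ.finite hl hlt hπ (t := t)
    (by rw [← RingHom.mem_ker, hker]; exact Ideal.mem_span_singleton_self t)
  obtain ⟨k, b, hspan, hrel⟩ :=
    exists_span_eq_top_of_finite_quotient ℛ hπθ hd (fun _ => rfl)
  let πQ : A →ₗ[Q] R :=
    { toFun := π
      map_add' := map_add π
      map_smul' := fun q a => by
        rw [Algebra.smul_def, map_mul, Algebra.smul_def]
        exact congrArg (· * π a) (comp_aeval_apply θ π q) }
  have ker_πQ : LinearMap.ker πQ = LinearMap.range (LinearMap.mulLeft Q t) := by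
    ext a
    have : π a = 0 ↔ a ∈ Ideal.span {t} := by rw [← hker, RingHom.mem_ker]
    simpa [Ideal.mem_span_singleton, dvd_def, eq_comm] using! this
  have mem_smul_top_iff (a : A) :
      a ∈ idealOfVars (Fin m) F • (⊤ : Submodule Q A) ↔ a ∈ Ideal.span (Set.range θ) := by
    rw [Ideal.smul_top_eq_map, ← map_idealOfVars_aeval (L := F) θ]
    rfl
  have linearIndependent_b : LinearIndependent Q b := by
    refine linearIndependent_of_relations_mem (isPrime_idealOfVars (Fin m) F).ne_top (π := πQ) hπ
      ker_πQ (fun a ha => ?_) hspan hrel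
    rw [mem_smul_top_iff] at ha ⊢
    exact mem_span_range_of_mul_mem hθ hl hlt ha
  let B := Module.Basis.mk linearIndependent_b hspan.ge
  exact ⟨.of_basis B, .of_basis B⟩

end QuotientByParameter

section Reduction

open scoped Polynomial

variable {F A : Type*} [Field F] [CommRing A] [Algebra F A]

theorem exists_isFiniteFree_aeval_of_common_degree (𝒜 : ℕ → Submodule F A)
    [SetLike.GradedMonoid 𝒜] {n : ℕ} {y : Fin n → A}
    (hy : IsFiniteFree (aeval (R := F) y).toRingHom) (hhom : ∀ i, ∃ d, 0 < d ∧ y i ∈ 𝒜 d) :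
    ∃ (D : ℕ) (z : Fin n → A), 0 < D ∧ (∀ i, z i ∈ 𝒜 D) ∧
      IsFiniteFree (aeval (R := F) z).toRingHom := by
  choose d hd hyd using hhom
  have hD : 0 < ∏ i, d i := Finset.prod_pos fun i _ => hd i
  have hdvd (i) : d i ∣ ∏ i, d i := Finset.dvd_prod_of_mem d (Finset.mem_univ i)
  let e (i) := (∏ i, d i) / d i
  have he (i) : 0 < e i := Nat.div_pos (Nat.le_of_dvd hD (hdvd i)) (hd i)
  refine ⟨∏ i, d i, fun i => y i ^ e i, hD, fun i => ?_, ?_⟩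
  · rw [← Nat.div_mul_cancel (hdvd i)]
    exact SetLike.pow_mem_graded (e i) (hyd i)
  · simpa using hy.aeval_aeval (g := fun i => Polynomial.X ^ e i)
      (fun i => Polynomial.monic_X_pow (e i)) fun i => by simpa using he i

theorem isFiniteFree_aeval_succ [Algebra F[X] A] [IsScalarTower F F[X] A] {m : ℕ}
    {y : Fin (m + 1) → A} (hy : IsFiniteFree (aeval (R := F) y).toRingHom)
    (hy0 : algebraMap F[X] A Polynomial.X = y 0) :
    IsFiniteFree (aeval (R := F[X]) fun i => y (Fin.succ i)).toRingHom := by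
  let e : MvPolynomial (Fin (m + 1)) F ≃ₐ[F] MvPolynomial (Fin m) F[X] :=
    (renameEquiv F (_root_.finSuccEquiv m)).trans (optionEquivRight F (Fin m))
  have comp_e : ((aeval (R := F[X]) fun i => y (Fin.succ i)).restrictScalars F).comp e.toAlgHom =
      aeval (R := F) y := by
    refine algHom_ext (Fin.cases ?_ fun i => ?_) <;> simp [e, hy0]
  refine .of_ringEquiv e.symm.toRingEquiv (.refl A) (RingHom.ext fun q => ?_) hy
  simp [← comp_e]

theorem aeval_homogenizeAt_mem (𝒜 : ℕ → Submodule F A) [SetLike.GradedMonoid 𝒜] {L : Type*}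
    [CommRing L] [Nontrivial L] [Algebra F L] [Algebra L A] [IsScalarTower F L A] {D : ℕ} {w : L}
    (hw : algebraMap L A w ∈ 𝒜 D) {x : A} (hx : x ∈ 𝒜 D) (p : F[X]) :
    Polynomial.aeval x (homogenizeAt w p) ∈ 𝒜 (p.natDegree * D) := by
  rw [aeval_homogenizeAt]
  refine sum_mem fun k hk => Submodule.smul_mem _ _ ?_
  have hmul := SetLike.mul_mem_graded (SetLike.pow_mem_graded (p.natDegree - k) hw)
    (SetLike.pow_mem_graded k hx)
  rwa [← add_smul, Nat.sub_add_cancel (Finset.mem_range_succ_iff.1 hk)] at hmul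

theorem exists_isFiniteFree_aeval_of_surjective [IsDomain A] {R : Type*} [CommRing R]
    [Algebra F R] (𝒜 : ℕ → Submodule F A) [SetLike.GradedMonoid 𝒜] (ℛ : ℕ → Submodule F R)
    [GradedAlgebra ℛ] {π : A →ₐ[F] R} (hπ : Function.Surjective π)
    (hπ_mem : ∀ d, ∀ a ∈ 𝒜 d, π a ∈ ℛ d) {t : A} (ht : t ≠ 0)
    (hker : RingHom.ker π = Ideal.span {t}) {m : ℕ} {y : Fin (m + 1) → A}
    (hhom : ∀ i, ∃ d, 0 < d ∧ y i ∈ 𝒜 d) (hy : IsFiniteFree (aeval (R := F) y).toRingHom) :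
    ∃ θ : Fin m → R, (∀ i, ∃ d, 0 < d ∧ θ i ∈ ℛ d) ∧
      IsFiniteFree (aeval (R := F) θ).toRingHom := by
  obtain ⟨D, z, hD, hzD, hz⟩ := exists_isFiniteFree_aeval_of_common_degree 𝒜 hy hhom
  let : Algebra F[X] A := (Polynomial.aeval (z 0)).toAlgebra
  have : IsScalarTower F F[X] A := .of_algebraMap_eq fun r => (Polynomial.aeval_C (z 0) r).symm
  have hz0 : algebraMap F[X] A Polynomial.X = z 0 := Polynomial.aeval_X (z 0)
  obtain ⟨p, hp, hθ, l, hl, hlt⟩ := exists_isFiniteFree_homogenizeAt (F := F)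
    (isFiniteFree_aeval_succ hz hz0) Polynomial.X_ne_zero ht
  have hθ_mem (i) := hπ_mem _ _ (aeval_homogenizeAt_mem 𝒜 (hz0 ▸ hzD 0) (hzD (Fin.succ i)) (p i))
  have hd (i) : 0 < (p i).natDegree * D := Nat.mul_pos (hp i) hD
  exact ⟨_, fun i => ⟨_, hd i, hθ_mem i⟩, isFiniteFree_aeval_map ℛ hθ hl hlt hπ hker hd hθ_mem⟩

end Reduction

section HomogeneousSubalgebra

/-- The grading induced on a subalgebra `R`, with the elements of `R` that have degree `d` in the
ambient graded algebra as its component of degree `d`. -/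
def inducedGrading {ι F S : Type*} [CommRing F] [CommRing S] [Algebra F S]
    (𝒮 : ι → Submodule F S) (R : Subalgebra F S) (d : ι) : Submodule F R :=
  (𝒮 d).comap R.val.toLinearMap

variable {ι F S : Type*} [AddMonoid ι] [CommRing F] [CommRing S] [Algebra F S]
  {𝒮 : ι → Submodule F S}

instance (R : Subalgebra F S) [SetLike.GradedMonoid 𝒮] :
    SetLike.GradedMonoid (inducedGrading 𝒮 R) where
  one_mem := SetLike.one_mem_graded 𝒮
  mul_mem _ _ _ _ hx hy := SetLike.mul_mem_graded (A := 𝒮) hx hy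

theorem isInternal_inducedGrading [DecidableEq ι] [GradedAlgebra 𝒮] {R : Subalgebra F S}
    (hR : DirectSum.SetLike.IsHomogeneous 𝒮 R) : DirectSum.IsInternal (inducedGrading 𝒮 R) := by
  have internal := DirectSum.Decomposition.isInternal 𝒮
  refine DirectSum.isInternal_submodule_of_iSupIndep_of_iSup_eq_top (fun d => ?_) ?_
  · rw [Submodule.disjoint_def]
    intro x hx hx'
    have iSup_le_comap : ⨆ e ≠ d, inducedGrading 𝒮 R e ≤
        (⨆ e ≠ d, 𝒮 e).comap R.val.toLinearMap :=
      iSup₂_le fun e he => Submodule.comap_mono (le_iSup₂ (f := fun e (_ : e ≠ d) => 𝒮 e) e he)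
    exact Subtype.ext (Submodule.disjoint_def.1 (internal.submodule_iSupIndep d) x hx
      (iSup_le_comap hx'))
  · classical
    refine eq_top_iff.2 fun x _ => ?_
    have sum_components : x = ∑ d ∈ (DirectSum.decompose 𝒮 (x : S)).support,
        ⟨DirectSum.decompose 𝒮 (x : S) d, hR d x.2⟩ :=
      Subtype.ext (by simp [DirectSum.sum_support_decompose 𝒮 (x : S)])
    rw [sum_components]
    exact sum_mem fun d _ => Submodule.mem_iSup_of_mem d (DirectSum.decompose 𝒮 (x : S) d).2

/-- A homogeneous subalgebra of a graded algebra is graded. -/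
@[reducible]
noncomputable def gradedAlgebraInducedGrading [DecidableEq ι] [GradedAlgebra 𝒮]
    {R : Subalgebra F S} (hR : DirectSum.SetLike.IsHomogeneous 𝒮 R) :
    GradedAlgebra (inducedGrading 𝒮 R) where
  __ := (isInternal_inducedGrading hR).chooseDecomposition

end HomogeneousSubalgebra

section Descent

attribute [local instance] gradedAlgebra

theorem isCM_of_surjective {F : Type*} [Field F] {m : ℕ}
    {A : Subalgebra F (MvPolynomial (Fin (m + 1)) F)} {R : Subalgebra F (MvPolynomial (Fin m) F)}
    (hR : DirectSum.SetLike.IsHomogeneous (homogeneousSubmodule (Fin m) F) R)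
    {π : A →ₐ[F] R} (hπ : Function.Surjective π)
    (hπ_hom : ∀ (d : ℕ) (a : A), (a : MvPolynomial (Fin (m + 1)) F).IsHomogeneous d →
      (π a : MvPolynomial (Fin m) F).IsHomogeneous d)
    {t : A} (ht : t ≠ 0) (hker : RingHom.ker π = Ideal.span {t}) (hA : IsCM A) : IsCM R := by
  obtain ⟨y, hhom, hy⟩ := (isCM_iff_exists_isFiniteFree A).1 hA
  let := gradedAlgebraInducedGrading hR
  exact (isCM_iff_exists_isFiniteFree R).2 <| exists_isFiniteFree_aeval_of_surjective
    (inducedGrading (homogeneousSubmodule (Fin (m + 1)) F) A)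
    (inducedGrading (homogeneousSubmodule (Fin m) F) R) hπ hπ_hom ht hker hhom hy

end Descent

section PolynomialExtension

open scoped Polynomial

theorem injective_eval₂RingHom_of_leftInverse {A R : Type*} [CommRing A] [IsDomain A] [CommRing R]
    {s : R →+* A} {π : A →+* R} (hs : Function.LeftInverse π s) {t : A} (ht : t ≠ 0)
    (hπt : π t = 0) : Function.Injective (Polynomial.eval₂RingHom s t) := by
  rw [injective_iff_map_eq_zero]
  intro q hq
  by_contra hq0
  obtain ⟨r, hr, hXr⟩ := Polynomial.exists_eq_pow_rootMultiplicity_mul_and_not_dvd q hq0 0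
  rw [map_zero, sub_zero] at hr hXr
  have hr0 : Polynomial.eval₂ s t r = 0 := by
    rw [hr, map_mul, map_pow] at hq
    simpa [ht] using hq
  have π_comp_s : π.comp s = RingHom.id R := RingHom.ext hs
  have π_eval : π (Polynomial.eval₂ s t r) = r.coeff 0 := by
    rw [Polynomial.hom_eval₂, hπt, π_comp_s, Polynomial.coeff_zero_eq_eval_zero]
    rfl
  exact hXr (Polynomial.X_dvd_iff.2 (by rw [← π_eval, hr0, map_zero]))

theorem isFiniteFree_aeval_cons_of_bijective {F A R : Type*} [CommRing F] [CommRing A] [CommRing R]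
    [Algebra F A] [Algebra F R] {m : ℕ} {s : R →ₐ[F] A} {t : A}
    (hbij : Function.Bijective (Polynomial.eval₂RingHom s.toRingHom t)) {f : Fin m → R}
    (hf : IsFiniteFree (aeval (R := F) f).toRingHom) :
    IsFiniteFree
      (aeval (R := F) (Fin.cons t fun i => s (f i) : Fin (m + 1) → A)).toRingHom := by
  refine .of_ringEquiv (finSuccEquiv F m).toRingEquiv (.refl A)
    (MvPolynomial.ringHom_ext (fun r => ?_) (Fin.cases ?_ fun i => ?_))
    ((IsFiniteFree.of_bijective hbij).comp hf.mapRingHom)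
  · simp [finSuccEquiv_apply]
  · simp [finSuccEquiv_X_zero]
  · simp [finSuccEquiv_X_succ]

theorem surjective_eval₂RingHom_of_leftInverse {F A R : Type*} [Field F] [CommRing A] [CommRing R]
    [Algebra F A] [Algebra F R] (𝒜 : ℕ → Submodule F A) [GradedAlgebra 𝒜]
    (ℛ : ℕ → Submodule F R) [GradedAlgebra ℛ] {s : R →ₐ[F] A} (hs_mem : ∀ d, ∀ r ∈ ℛ d, s r ∈ 𝒜 d)
    {π : A →ₐ[F] R} (hs : Function.LeftInverse π s) {t : A} {e : ℕ} (he : 0 < e) (hte : t ∈ 𝒜 e)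
    (hker : RingHom.ker π = Ideal.span {t}) :
    Function.Surjective (Polynomial.eval₂RingHom s.toRingHom t) := by
  let H := s.toLinearMap '' {r | SetLike.IsHomogeneousElem ℛ r}
  have hH : ∀ x ∈ H, SetLike.IsHomogeneousElem 𝒜 x := by
    rintro _ ⟨r, ⟨d, hr⟩, rfl⟩
    exact ⟨d, hs_mem d r hr⟩
  have span_H : Submodule.span F H = LinearMap.range s.toLinearMap := by
    rw [← Submodule.map_span, span_isHomogeneousElem_eq_top, Submodule.map_top]
  let W := LinearMap.range (Polynomial.eval₂AlgHom s t fun _ => .all _ _).toLinearMap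
  have hW : W = ⊤ := by
    refine eq_top_of_span_sup_span_eq_top 𝒜 (g := fun _ : Unit => t) (fun _ => hte)
      (fun _ => he) hH ?_ ?_ ?_
    · refine eq_top_iff.2 fun x _ => ?_
      have hx : x - s (π x) ∈ Ideal.span {t} := by rw [← hker, RingHom.mem_ker]; simp [hs (π x)]
      rw [span_H, ← add_sub_cancel (s (π x)) x]
      exact Submodule.add_mem_sup ⟨π x, rfl⟩ (by simpa using hx)
    · rintro _ ⟨r, -, rfl⟩
      exact ⟨Polynomial.C r, by simp⟩
    · rintro - _ ⟨q, rfl⟩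
      exact ⟨q * Polynomial.X, by simp⟩
  intro x
  exact hW.ge (Submodule.mem_top (x := x))

end PolynomialExtension

section Ascent

attribute [local instance] gradedAlgebra

theorem isCM_of_leftInverse {F : Type*} [Field F] {m : ℕ}
    {A : Subalgebra F (MvPolynomial (Fin (m + 1)) F)} {R : Subalgebra F (MvPolynomial (Fin m) F)}
    (hA : DirectSum.SetLike.IsHomogeneous (homogeneousSubmodule (Fin (m + 1)) F) A)
    (hR : DirectSum.SetLike.IsHomogeneous (homogeneousSubmodule (Fin m) F) R)
    {π : A →ₐ[F] R} {s : R →ₐ[F] A} (hs : Function.LeftInverse π s)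
    (hs_hom : ∀ (d : ℕ) (r : R), (r : MvPolynomial (Fin m) F).IsHomogeneous d →
      (s r : MvPolynomial (Fin (m + 1)) F).IsHomogeneous d)
    {t : A} (ht : t ≠ 0) {e : ℕ} (he : 0 < e)
    (hte : (t : MvPolynomial (Fin (m + 1)) F).IsHomogeneous e)
    (hker : RingHom.ker π = Ideal.span {t}) (hCM : IsCM R) : IsCM A := by
  obtain ⟨f, hhom, hf⟩ := (isCM_iff_exists_isFiniteFree R).1 hCM
  let := gradedAlgebraInducedGrading hA
  let := gradedAlgebraInducedGrading hR
  have hπt : π t = 0 := by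
    rw [← RingHom.mem_ker, hker]
    exact Ideal.mem_span_singleton_self t
  have hinj := injective_eval₂RingHom_of_leftInverse (s := s.toRingHom) (π := π.toRingHom) hs ht hπt
  have hsurj := surjective_eval₂RingHom_of_leftInverse
    (inducedGrading (homogeneousSubmodule (Fin (m + 1)) F) A)
    (inducedGrading (homogeneousSubmodule (Fin m) F) R) hs_hom hs he hte hker
  refine (isCM_iff_exists_isFiniteFree A).2
    ⟨_, Fin.cases ⟨e, he, hte⟩ fun i => ?_, isFiniteFree_aeval_cons_of_bijective ⟨hinj, hsurj⟩ hf⟩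
  obtain ⟨d, hd, hfd⟩ := hhom i
  exact ⟨d, hd, hs_hom d _ hfd⟩

end Ascent

section LinearSubstitution

variable {F : Type*} [CommRing F] {ι κ τ : Type*} [Fintype κ] [Fintype τ]

/-- The linear form with a given coefficient vector. -/
noncomputable def linForm : (κ → F) →ₗ[F] MvPolynomial κ F :=
  Fintype.linearCombination F X

/-- The algebra map `S[β]` induced by the linear map `β : v ↦ v ᵥ* M` on coefficient vectors of
linear forms; `matSub` is the case of a square matrix. -/
noncomputable def linSub (M : Matrix ι κ F) : MvPolynomial ι F →ₐ[F] MvPolynomial κ F :=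
  aeval fun i => linForm (M i)

theorem linForm_isHomogeneous (v : κ → F) : (linForm v).IsHomogeneous 1 := by
  rw [linForm, Fintype.linearCombination_apply]
  exact IsHomogeneous.sum _ _ _ fun j _ => by
    simpa [smul_eq_C_mul] using isHomogeneous_C_mul_X (v j) j

theorem linForm_injective : Function.Injective (linForm (F := F) (κ := κ)) :=
  (linearIndependent_X κ F).fintypeLinearCombination_injective

theorem linSub_isHomogeneous (M : Matrix ι κ F) {p : MvPolynomial ι F} {d : ℕ}
    (hp : p.IsHomogeneous d) : (linSub M p).IsHomogeneous d :=
  one_mul d ▸ hp.aeval _ fun i => linForm_isHomogeneous (M i)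

theorem linSub_linForm [Fintype ι] (M : Matrix ι κ F) (v : ι → F) :
    linSub M (linForm v) = linForm (Matrix.vecMul v M) := by
  rw [linForm, Fintype.linearCombination_apply, Matrix.vecMul_eq_sum]
  simp [linSub]

theorem linSub_linSub (M : Matrix ι κ F) (N : Matrix κ τ F) (p : MvPolynomial ι F) :
    linSub N (linSub M p) = linSub (M * N) p := by
  have comp_eq : (linSub N).comp (linSub M) = linSub (M * N) := algHom_ext fun i => by
    simp [linSub, ← linSub_linForm, Matrix.mul_apply_eq_vecMul]
  exact DFunLike.congr_fun comp_eq p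

theorem linSub_one [Fintype ι] [DecidableEq ι] (p : MvPolynomial ι F) :
    linSub (1 : Matrix ι ι F) p = p := by
  have eq_id : linSub (1 : Matrix ι ι F) = AlgHom.id F _ := algHom_ext fun i => by
    simp [linSub, linForm, Fintype.linearCombination_apply, Matrix.one_apply]
  exact DFunLike.congr_fun eq_id p

theorem linForm_dvd_sub_linSub_linSub [Fintype ι] [DecidableEq κ] {B : Matrix ι κ F}
    {γ : Matrix κ ι F} (hγ : γ * B = 1) {f : ι → F}
    (hker : ∀ u, Matrix.vecMul u B = 0 → ∃ c : F, u = c • f) (p : MvPolynomial ι F) :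
    linForm f ∣ p - linSub γ (linSub B p) := by
  classical
  have sub_mul_eq_zero : ((1 : Matrix ι ι F) - B * γ) * B = 0 := by
    rw [Matrix.sub_mul, Matrix.one_mul, Matrix.mul_assoc, hγ, Matrix.mul_one, sub_self]
  let mk := Ideal.Quotient.mkₐ F (Ideal.span {linForm f})
  have mk_comp : mk = mk.comp (linSub (B * γ)) := algHom_ext fun i => by
    obtain ⟨c, hc⟩ : ∃ c : F, ((1 : Matrix ι ι F) - B * γ) i = c • f :=
      hker _ ((Matrix.mul_apply_eq_vecMul _ _ i).symm.trans (congrFun sub_mul_eq_zero i))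
    refine Ideal.Quotient.eq.2 (Ideal.mem_span_singleton.2 ⟨C c, ?_⟩)
    calc X i - linSub (B * γ) (X i) = linSub 1 (X i) - linSub (B * γ) (X i) := by rw [linSub_one]
      _ = linForm (((1 : Matrix ι ι F) - B * γ) i) := by
        simp only [linSub, aeval_X, ← map_sub]
        rfl
      _ = linForm f * C c := by rw [hc, map_smul, smul_eq_C_mul, mul_comm]
  rw [linSub_linSub, ← Ideal.mem_span_singleton]
  exact Ideal.Quotient.eq.1 (DFunLike.congr_fun mk_comp p)

end LinearSubstitution

section Invariants

attribute [local instance] gradedAlgebra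

variable {F : Type*} [CommRing F] {G : Type*} [Group G] {n k : ℕ} {ρ : G →* GL (Fin n) F}
  {ρ' : G →* GL (Fin k) F}

theorem mem_invariants_iff {p : MvPolynomial (Fin n) F} :
    p ∈ invariants ρ ↔ ∀ σ, linSub (ρ σ : Matrix (Fin n) (Fin n) F) p = p :=
  Iff.rfl

theorem invariants_isHomogeneous (ρ : G →* GL (Fin n) F) :
    DirectSum.SetLike.IsHomogeneous (homogeneousSubmodule (Fin n) F) (invariants ρ) := by
  intro d p hp σ
  let g : homogeneousSubmodule (Fin n) F →+*ᵍ homogeneousSubmodule (Fin n) F :=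
    { (linSub (ρ σ : Matrix (Fin n) (Fin n) F)).toRingHom with
      map_mem := fun h => linSub_isHomogeneous _ h }
  have hgp : g p = p := hp σ
  have := g.map_directSumDecompose (x := p) (i := d)
  rw [hgp] at this
  exact this

theorem linForm_mem_invariants {f : Fin n → F}
    (hf : ∀ σ, Matrix.vecMul f (ρ σ : Matrix (Fin n) (Fin n) F) = f) :
    linForm f ∈ invariants ρ :=
  mem_invariants_iff.2 fun σ => by rw [linSub_linForm, hf]

/-- The map on invariant rings induced by an equivariant linear map. -/
noncomputable def invariantsMap (M : Matrix (Fin n) (Fin k) F)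
    (hM : ∀ σ, (ρ σ : Matrix (Fin n) (Fin n) F) * M = M * (ρ' σ : Matrix (Fin k) (Fin k) F)) :
    invariants ρ →ₐ[F] invariants ρ' :=
  ((linSub M).comp (invariants ρ).val).codRestrict _ fun p => mem_invariants_iff.2 fun σ => by
    rw [AlgHom.comp_apply, linSub_linSub, ← hM, ← linSub_linSub]
    exact congrArg (linSub M) (p.2 σ)

variable {B : Matrix (Fin n) (Fin k) F}
  {hB : ∀ σ, (ρ σ : Matrix (Fin n) (Fin n) F) * B = B * (ρ' σ : Matrix (Fin k) (Fin k) F)}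
  {γ : Matrix (Fin k) (Fin n) F}

theorem leftInverse_invariantsMap
    {hγ : ∀ σ, (ρ' σ : Matrix (Fin k) (Fin k) F) * γ = γ * (ρ σ : Matrix (Fin n) (Fin n) F)}
    (hγB : γ * B = 1) : Function.LeftInverse (invariantsMap B hB) (invariantsMap γ hγ) :=
  fun r => Subtype.ext <| (linSub_linSub γ B r).trans <| by rw [hγB, linSub_one]

theorem ker_invariantsMap [IsDomain F] (hγB : γ * B = 1) {f : Fin n → F}
    (hker : ∀ u, Matrix.vecMul u B = 0 ↔ ∃ c : F, u = c • f) (hf0 : f ≠ 0)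
    (hf : linForm f ∈ invariants ρ) :
    RingHom.ker (invariantsMap B hB) = Ideal.span {⟨linForm f, hf⟩} := by
  have hlin : linForm f ≠ 0 := (map_ne_zero_iff linForm linForm_injective).2 hf0
  ext p
  rw [RingHom.mem_ker, Ideal.mem_span_singleton, Subtype.ext_iff]
  constructor
  · intro hp
    obtain ⟨q, hq⟩ := linForm_dvd_sub_linSub_linSub hγB (fun u => (hker u).1) (p : MvPolynomial _ F)
    replace hp : linSub B (p : MvPolynomial _ F) = 0 := hp
    rw [hp, map_zero, sub_zero] at hq
    refine ⟨⟨q, mem_invariants_iff.2 fun σ => mul_left_cancel₀ hlin ?_⟩, Subtype.ext hq⟩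
    have hpσ := mem_invariants_iff.1 p.2 σ
    rwa [hq, map_mul, mem_invariants_iff.1 hf σ] at hpσ
  · rintro ⟨q, rfl⟩
    have hfB : Matrix.vecMul f B = 0 := (hker f).2 ⟨1, (one_smul F f).symm⟩
    exact (map_mul (linSub B) _ _).trans (by rw [linSub_linForm, hfB, map_zero, zero_mul]; rfl)

end Invariants

theorem stmt5_general {F : Type*} [Field F] {G : Type*} [Group G] {m : ℕ}
    (ρU : G →* GL (Fin (m + 1)) F) (ρV : G →* GL (Fin m) F)
    (B : Matrix (Fin (m + 1)) (Fin m) F) (fhat : Fin (m + 1) → F)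
    (hker : ∀ u : Fin (m + 1) → F, Matrix.vecMul u B = 0 ↔ ∃ c : F, u = c • fhat)
    (hne : fhat ≠ 0)
    (hequiv : ∀ σ : G, (ρU σ : Matrix (Fin (m + 1)) (Fin (m + 1)) F) * B
      = B * (ρV σ : Matrix (Fin m) (Fin m) F))
    (hfix : ∀ σ : G, Matrix.vecMul fhat (ρU σ : Matrix (Fin (m + 1)) (Fin (m + 1)) F) = fhat)
    (hsplit : ∃ γ : Matrix (Fin m) (Fin (m + 1)) F, γ * B = 1 ∧
      ∀ σ : G, (ρV σ : Matrix (Fin m) (Fin m) F) * γ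
        = γ * (ρU σ : Matrix (Fin (m + 1)) (Fin (m + 1)) F)) :
    IsCM (invariants ρU) ↔ IsCM (invariants ρV) := by
  obtain ⟨γ, hγB, hγ⟩ := hsplit
  let t : invariants ρU := ⟨linForm fhat, linForm_mem_invariants hfix⟩
  have ht : t ≠ 0 := Subtype.coe_ne_coe.1 ((map_ne_zero_iff linForm linForm_injective).2 hne)
  have ker_eq : RingHom.ker (invariantsMap B hequiv) = Ideal.span {t} :=
    ker_invariantsMap hγB hker hne t.2
  have hleft : Function.LeftInverse (invariantsMap B hequiv) (invariantsMap γ hγ) :=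
    leftInverse_invariantsMap hγB
  exact ⟨isCM_of_surjective (invariants_isHomogeneous ρV) hleft.surjective
      (fun _ _ => linSub_isHomogeneous B) ht ker_eq,
    isCM_of_leftInverse (invariants_isHomogeneous ρU) (invariants_isHomogeneous ρV) hleft
      (fun _ _ => linSub_isHomogeneous γ) ht one_pos (linForm_isHomogeneous fhat) ker_eq⟩

/-- In the situation of a split short exact sequence
`0 → U' → U →(β) V → 0` of right `FG`-modules, with `U' ≅ F` the trivial module spanned by a
`G`-fixed element `f̂ ∈ U ⊆ S[U]₁`: `S[U]^G` is Cohen-Macaulay if and only if `S[V]^G` is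
Cohen-Macaulay. -/
theorem stmt5 {F : Type*} [Field F] {G : Type*} [Group G] [Finite G] {m : ℕ}
    (ρU : G →* GL (Fin (m + 1)) F) (ρV : G →* GL (Fin m) F)
    (B : Matrix (Fin (m + 1)) (Fin m) F) (fhat : Fin (m + 1) → F)
    (hsur : ∀ v : Fin m → F, ∃ u : Fin (m + 1) → F, Matrix.vecMul u B = v)
    (hker : ∀ u : Fin (m + 1) → F, Matrix.vecMul u B = 0 ↔ ∃ c : F, u = c • fhat)
    (hne : fhat ≠ 0)
    (hequiv : ∀ σ : G, (ρU σ : Matrix (Fin (m + 1)) (Fin (m + 1)) F) * B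
      = B * (ρV σ : Matrix (Fin m) (Fin m) F))
    (hfix : ∀ σ : G, Matrix.vecMul fhat (ρU σ : Matrix (Fin (m + 1)) (Fin (m + 1)) F) = fhat)
    (hsplit : ∃ γ : Matrix (Fin m) (Fin (m + 1)) F, γ * B = 1 ∧
      ∀ σ : G, (ρV σ : Matrix (Fin m) (Fin m) F) * γ
        = γ * (ρU σ : Matrix (Fin (m + 1)) (Fin (m + 1)) F)) :
    IsCM (invariants ρU) ↔ IsCM (invariants ρV) :=
  stmt5_general ρU ρV B fhat hker hne hequiv hfix hsplit
end

section
/- Let H ≤ G be a subgroup such that char(F) does not divide [G:H], let R = S[V]^G and S = S[V]^H (so R ⊆ S), and let {f_1, …, f_n} ⊆ R be a homogeneous system of parameters of R. Then the kernel of the composite F-algebra homomorphism R ↪ S → S/(f_1 S + … + f_n S) is exactly the ideal f_1 R + … + f_n R of R generated by f_1, …, f_n. -/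
set_option synthInstance.maxHeartbeats 1000000
set_option maxHeartbeats 1000000

open MvPolynomial

/-!
The relative transfer `Tr : S[V]^H → S[V]^G`, `p ↦ ∑ gp` over the cosets `gH`, is
`S[V]^G`-linear and restricts to multiplication by `[G : H]` on `S[V]^G`. If `[G : H]` is
invertible, `[G : H]⁻¹ Tr` is therefore an `S[V]^G`-linear retraction of `S[V]^G ⊆ S[V]^H`, and
applying it to `r = ∑ fᵢ cᵢ` moves the coefficients `cᵢ` from `S[V]^H` into `S[V]^G`.
-/

section RelativeTransfer

variable {G M : Type*} [Group G] [AddCommMonoid M] [DistribMulAction G M] {H : Subgroup G}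

/-- The action of a coset `gH` on the `H`-fixed points of `M`, that is `m ↦ g • m`. -/
def cosetSMul (q : G ⧸ H) : FixedPoints.addSubmonoid H M →+ M :=
  Quotient.lift
    (fun g => (DistribSMul.toAddMonoidHom M g).comp (FixedPoints.addSubmonoid H M).subtype)
    (fun a b hab => by
      ext m
      have hm : (a⁻¹ * b) • (m : M) = m := m.2 ⟨a⁻¹ * b, QuotientGroup.leftRel_apply.mp hab⟩
      change a • (m : M) = b • (m : M)
      rw [← hm, ← mul_smul, mul_inv_cancel_left, hm])
    q

theorem cosetSMul_mk (g : G) (m : FixedPoints.addSubmonoid H M) :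
    cosetSMul (g : G ⧸ H) m = g • (m : M) :=
  rfl

theorem smul_cosetSMul (g : G) (q : G ⧸ H) (m : FixedPoints.addSubmonoid H M) :
    g • cosetSMul q m = cosetSMul (g • q) m := by
  induction q using QuotientGroup.induction_on with
  | H a => rw [MulAction.Quotient.smul_coe, cosetSMul_mk, cosetSMul_mk, smul_eq_mul, mul_smul]

theorem cosetSMul_of_forall_smul_eq (q : G ⧸ H) {m : FixedPoints.addSubmonoid H M}
    (hm : ∀ g : G, g • (m : M) = m) : cosetSMul q m = m := by
  induction q using QuotientGroup.induction_on with
  | H a => rw [cosetSMul_mk, hm]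

variable [H.FiniteIndex]

attribute [local instance] Subgroup.fintypeQuotientOfFiniteIndex

variable (H) in
/-- The relative transfer `m ↦ ∑ g • m`, summed over the cosets `gH`, from the `H`-fixed points
to the `G`-fixed points of `M`. -/
noncomputable def relTransfer :
    FixedPoints.addSubmonoid H M →+ FixedPoints.addSubmonoid G M :=
  (∑ q : G ⧸ H, cosetSMul q).codRestrict _ fun m g => by
    simp only [AddMonoidHom.finsetSum_apply, Finset.smul_sum, smul_cosetSMul]
    exact Equiv.sum_comp (MulAction.toPerm g) fun q => cosetSMul q m

theorem coe_relTransfer (m : FixedPoints.addSubmonoid H M) :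
    (relTransfer H m : M) = ∑ q : G ⧸ H, cosetSMul q m :=
  AddMonoidHom.finsetSum_apply _ _ _

theorem coe_relTransfer_of_forall_smul_eq {m : FixedPoints.addSubmonoid H M}
    (hm : ∀ g : G, g • (m : M) = m) : (relTransfer H m : M) = H.index • (m : M) := by
  simp only [coe_relTransfer, cosetSMul_of_forall_smul_eq _ hm, Finset.sum_const,
    Finset.card_univ, Subgroup.index_eq_card, Nat.card_eq_fintype_card]

end RelativeTransfer

section FixedCoefficients

variable {G A : Type*} [Group G] {H : Subgroup G}

theorem cosetSMul_of_eq_mul [Semiring A] [MulSemiringAction G A] (q : G ⧸ H) {a : A}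
    (ha : ∀ g : G, g • a = a) {b c : FixedPoints.addSubmonoid H A} (hc : (c : A) = a * b) :
    cosetSMul q c = a * cosetSMul q b := by
  induction q using QuotientGroup.induction_on with
  | H g => rw [cosetSMul_mk, cosetSMul_mk, hc, smul_mul', ha]

theorem coe_relTransfer_of_eq_mul [Semiring A] [MulSemiringAction G A] [H.FiniteIndex] {a : A}
    (ha : ∀ g : G, g • a = a) {b c : FixedPoints.addSubmonoid H A} (hc : (c : A) = a * b) :
    (relTransfer H c : A) = a * relTransfer H b := by
  simp only [coe_relTransfer, cosetSMul_of_eq_mul _ ha hc, Finset.mul_sum]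

theorem index_nsmul_eq_sum_mul_relTransfer [Semiring A] [MulSemiringAction G A]
    [H.FiniteIndex] {ι : Type*} [Fintype ι] {f : ι → A} (hf : ∀ i, ∀ g : G, g • f i = f i)
    (c : ι → FixedPoints.addSubmonoid H A) {r : A} (hr : ∀ g : G, g • r = r)
    (hrc : r = ∑ i, f i * c i) : H.index • r = ∑ i, f i * relTransfer H (c i) := by
  let fc (i : ι) : FixedPoints.addSubmonoid H A :=
    ⟨f i * c i, fun h => by rw [smul_mul', Subgroup.smul_def, hf, (c i).2 h]⟩
  have coe_sum_fc : ((∑ i, fc i : FixedPoints.addSubmonoid H A) : A) = r := by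
    rw [hrc, AddSubmonoid.coe_finsetSum]
  calc H.index • r = relTransfer H (∑ i, fc i) := by
        rw [coe_relTransfer_of_forall_smul_eq fun g => by rw [coe_sum_fc, hr], coe_sum_fc]
    _ = ∑ i, (relTransfer H (fc i) : A) := by rw [map_sum, AddSubmonoid.coe_finsetSum]
    _ = ∑ i, f i * relTransfer H (c i) :=
        Finset.sum_congr rfl fun i _ => coe_relTransfer_of_eq_mul (hf i) rfl

theorem smul_eq_of_natCast_mul_eq_one [Semiring A] [MulSemiringAction G A] {k : ℕ} {u : A}
    (hu : (k : A) * u = 1) (g : G) : g • u = u := by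
  have smul_natCast : g • (k : A) = k := map_natCast (MulSemiringAction.toRingHom G A g) k
  have natCast_mul_smul : (k : A) * g • u = 1 := by
    rw [← smul_natCast, ← smul_mul', hu, smul_one]
  exact (left_inv_eq_right_inv (by rw [← Nat.cast_comm, hu]) natCast_mul_smul).symm

theorem exists_fixed_coeffs_of_isUnit_index [CommSemiring A] [MulSemiringAction G A]
    {ι : Type*} [Fintype ι] (hindex : IsUnit (H.index : A)) {f : ι → A}
    (hf : ∀ i, ∀ g : G, g • f i = f i) {c : ι → A} (hc : ∀ i, ∀ h : H, h • c i = c i)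
    {r : A} (hr : ∀ g : G, g • r = r) (hrc : r = ∑ i, f i * c i) :
    ∃ d : ι → A, (∀ i, ∀ g : G, g • d i = d i) ∧ r = ∑ i, f i * d i := by
  nontriviality A
  have : H.FiniteIndex := ⟨fun h => hindex.ne_zero (by rw [h, Nat.cast_zero])⟩
  obtain ⟨u, hu⟩ := hindex.exists_right_inv
  let t (i : ι) : FixedPoints.addSubmonoid G A := relTransfer H ⟨c i, hc i⟩
  refine ⟨fun i => u * t i, fun i g => ?_, ?_⟩
  · rw [smul_mul', smul_eq_of_natCast_mul_eq_one hu, (t i).2 g]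
  · calc r = u * H.index • r := by
          rw [nsmul_eq_mul, ← mul_assoc, mul_comm u, hu, one_mul]
      _ = u * ∑ i, f i * t i := by
          rw [index_nsmul_eq_sum_mul_relTransfer hf (fun i => ⟨c i, hc i⟩) hr hrc]
      _ = ∑ i, f i * (u * t i) := by simp only [Finset.mul_sum, mul_left_comm]

end FixedCoefficients

section MatrixAction

variable {F : Type*} [CommRing F] {n : ℕ}

theorem matSub_one : matSub (1 : Matrix (Fin n) (Fin n) F) = AlgHom.id F _ :=
  MvPolynomial.algHom_ext fun i => by
    simp only [matSub, aeval_X, Matrix.one_apply, ite_smul, one_smul, zero_smul,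
      Finset.sum_ite_eq, Finset.mem_univ, if_true, AlgHom.id_apply]

theorem matSub_mul (M N : Matrix (Fin n) (Fin n) F) :
    matSub (M * N) = (matSub N).comp (matSub M) :=
  MvPolynomial.algHom_ext fun i => by
    simp only [matSub, AlgHom.comp_apply, aeval_X, map_sum, map_smul, Matrix.mul_apply,
      Finset.smul_sum, Finset.sum_smul, smul_smul]
    exact Finset.sum_comm

variable {G : Type*} [Group G] (ρ : G →* GL (Fin n) F)

/-- The left action of `G` on polynomials given by `g • p = matSub (ρ g⁻¹) p`; the inverse is
there because `M ↦ matSub M` reverses products. -/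
noncomputable abbrev matSubAction : MulSemiringAction G (MvPolynomial (Fin n) F) where
  smul g p := matSub (ρ g⁻¹ : Matrix (Fin n) (Fin n) F) p
  one_smul p := by
    change matSub (ρ 1⁻¹ : Matrix (Fin n) (Fin n) F) p = p
    rw [inv_one, map_one, Units.val_one, matSub_one, AlgHom.id_apply]
  mul_smul g h p := by
    change matSub (ρ (g * h)⁻¹ : Matrix (Fin n) (Fin n) F) p =
      matSub (ρ g⁻¹ : Matrix (Fin n) (Fin n) F) (matSub (ρ h⁻¹ : Matrix (Fin n) (Fin n) F) p)
    rw [mul_inv_rev, map_mul, Units.val_mul, matSub_mul, AlgHom.comp_apply]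
  smul_zero _ := map_zero _
  smul_add _ := map_add _
  smul_one _ := map_one _
  smul_mul _ := map_mul _

theorem mem_invariants_iff_forall_smul_eq {p : MvPolynomial (Fin n) F} :
    letI := matSubAction ρ
    p ∈ invariants ρ ↔ ∀ g : G, g • p = p :=
  (Equiv.inv G).forall_congr_right.symm

theorem mem_invariants_comp_subtype_iff_forall_smul_eq {H : Subgroup G}
    {p : MvPolynomial (Fin n) F} :
    letI := matSubAction ρ
    p ∈ invariants (ρ.comp H.subtype) ↔ ∀ h : H, h • p = p :=
  mem_invariants_iff_forall_smul_eq (ρ.comp H.subtype)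

theorem invariants_le_invariants_comp {K : Type*} [Group K] (φ : K →* G) :
    invariants ρ ≤ invariants (ρ.comp φ) :=
  fun _ hp k => hp (φ k)

end MatrixAction

theorem stmt6_general {F : Type*} [CommRing F] {G : Type*} [Group G] {n : ℕ}
    (ρ : G →* GL (Fin n) F) (H : Subgroup G) (hindex : IsUnit (H.index : F))
    {ι : Type*} [Fintype ι] (f : ι → invariants ρ) (r : MvPolynomial (Fin n) F)
    (hr : r ∈ invariants ρ) :
    (∃ c : ι → MvPolynomial (Fin n) F, (∀ i, c i ∈ invariants (ρ.comp H.subtype)) ∧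
        r = ∑ i, (f i : MvPolynomial (Fin n) F) * c i) ↔
      ∃ c : ι → MvPolynomial (Fin n) F, (∀ i, c i ∈ invariants ρ) ∧
        r = ∑ i, (f i : MvPolynomial (Fin n) F) * c i := by
  let := matSubAction ρ
  constructor
  · rintro ⟨c, hc, hrc⟩
    have hindex' : IsUnit (H.index : MvPolynomial (Fin n) F) := by
      simpa only [map_natCast] using hindex.map (algebraMap F (MvPolynomial (Fin n) F))
    simp only [mem_invariants_comp_subtype_iff_forall_smul_eq] at hc
    simp only [mem_invariants_iff_forall_smul_eq] at hr ⊢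
    exact exists_fixed_coeffs_of_isUnit_index hindex'
      (fun i => (mem_invariants_iff_forall_smul_eq ρ).mp (f i).2) hc hr hrc
  · rintro ⟨c, hc, hrc⟩
    exact ⟨c, fun i => invariants_le_invariants_comp ρ H.subtype (hc i), hrc⟩

/-- Let `H ≤ G` be a subgroup such that `char F` does not divide `[G : H]`,
let `R = S[V]^G` and `S = S[V]^H` (so `R ⊆ S`), and let `{f₁, …, fₙ} ⊆ R` be a homogeneous
system of parameters of `R`. Then the kernel of the composite `F`-algebra homomorphism
`R ↪ S → S/(f₁S + … + fₙS)` is exactly the ideal `f₁R + … + fₙR` of `R` generated by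
`f₁, …, fₙ`; i.e. for `r ∈ R`, `r` lies in `f₁S + … + fₙS` if and only if `r` lies in
`f₁R + … + fₙR`. -/
theorem stmt6 {F : Type*} [Field F] {G : Type*} [Group G] [Finite G] {n : ℕ}
    (ρ : G →* GL (Fin n) F) (H : Subgroup G)
    (hchar : ¬ ((ringChar F : ℕ) ∣ H.index))
    (f : Fin n → (invariants ρ)) (hf : IsHSOP (invariants ρ) f) :
    ∀ r : MvPolynomial (Fin n) F, r ∈ invariants ρ →
      ((∃ c : Fin n → MvPolynomial (Fin n) F,
          (∀ i, c i ∈ invariants (ρ.comp H.subtype)) ∧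
          r = ∑ i, (f i : MvPolynomial (Fin n) F) * c i) ↔
       (∃ c : Fin n → MvPolynomial (Fin n) F,
          (∀ i, c i ∈ invariants ρ) ∧
          r = ∑ i, (f i : MvPolynomial (Fin n) F) * c i)) := by
  have hindex : (H.index : F) ≠ 0 := fun h => hchar ((ringChar.spec F _).mp h)
  exact stmt6_general ρ H hindex.isUnit f
end
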